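/- Let p, n be positive integers, let λ ≥ μ ≥ 0 and l ≥ 0 be real numbers, and suppose that either λ − μ ≥ (l+p)/(2p) or λ = μ = 0. For integers k ≥ 2 define B_k = (p+l)/((k+n−2)(λμ(k+n+p−2)+λ−μ)+p+l). Then for every integer k ≥ 2 one has B_{k+1} − B_{k+2} ≥ 0 and B_k − 2B_{k+1} + B_{k+2} ≥ 0; that is, the sequence {B_k}_{k≥2} is decreasing and convex. -/

import Mathlib

/-- The sequence `B_k = (p+l)/((k+n-2)(λμ(k+n+p-2)+λ-μ)+p+l)` from Lemma 2.3. -/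
noncomputable def Bseq (p n : ℕ) (lam mu l : ℝ) (k : ℕ) : ℝ :=
  ((p : ℝ) + l) /
    (((k : ℝ) + n - 2) * (lam * mu * ((k : ℝ) + n + p - 2) + lam - mu) + p + l)

/-!
With `x = k + n - 2 ≥ 0`, the denominator of `B_k` is the quadratic `q(x) = a x² + b x + c`, where
`a = λμ`, `b = λμp + (λ - μ)` and `c = p + l`. The second divided difference of `1 / q` at `x, y, z`
is `(a²(xy + yz + zx) + ab(x + y + z) + (b² - ac)) / (q(x) q(y) q(z))`, so for nonnegative `a, b`
and positive `c` the decreasing function `1 / q` is convex on `[0, ∞)` as soon as `ac ≤ b²`. When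
`λ - μ ≥ (l + p) / (2p)`, this bound follows from `ac ≤ 2ap(λ - μ) ≤ (ap + (λ - μ))²`.
-/

theorem slope_inv_quadratic {𝕜 : Type*} [Field 𝕜] {a b c x y : 𝕜} (hxy : x ≠ y)
    (hx : a * x ^ 2 + b * x + c ≠ 0) (hy : a * y ^ 2 + b * y + c ≠ 0) :
    ((a * y ^ 2 + b * y + c)⁻¹ - (a * x ^ 2 + b * x + c)⁻¹) / (y - x) =
      -(a * (x + y) + b) / ((a * x ^ 2 + b * x + c) * (a * y ^ 2 + b * y + c)) := by
  have hyx : y - x ≠ 0 := sub_ne_zero.2 hxy.symm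
  rw [inv_sub_inv hy hx, div_div,
    div_eq_div_iff (mul_ne_zero (mul_ne_zero hy hx) hyx) (mul_ne_zero hx hy)]
  ring

section InvQuadratic

variable {𝕜 : Type*} [Field 𝕜] [LinearOrder 𝕜] [IsStrictOrderedRing 𝕜] {a b c : 𝕜}

theorem quadratic_pos_of_nonneg (ha : 0 ≤ a) (hb : 0 ≤ b) (hc : 0 < c) {x : 𝕜} (hx : 0 ≤ x) :
    0 < a * x ^ 2 + b * x + c := by
  positivity

theorem antitoneOn_inv_quadratic (ha : 0 ≤ a) (hb : 0 ≤ b) (hc : 0 < c) :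
    AntitoneOn (fun x ↦ (a * x ^ 2 + b * x + c)⁻¹) (Set.Ici 0) := by
  intro x hx y _ hxy
  have hx₀ : 0 ≤ x := hx
  have := quadratic_pos_of_nonneg ha hb hc hx₀
  dsimp only
  gcongr

theorem convexOn_inv_quadratic (ha : 0 ≤ a) (hb : 0 ≤ b) (hc : 0 < c) (habc : a * c ≤ b ^ 2) :
    ConvexOn 𝕜 (Set.Ici 0) (fun x ↦ (a * x ^ 2 + b * x + c)⁻¹) := by
  refine convexOn_of_slope_mono_adjacent (convex_Ici 0) fun {x y z} hx hz hxy hyz ↦ ?_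
  have hx₀ : 0 ≤ x := hx
  have hy₀ : 0 ≤ y := hx₀.trans hxy.le
  have hz₀ : 0 ≤ z := hz
  have hqx := quadratic_pos_of_nonneg ha hb hc hx₀
  have hqy := quadratic_pos_of_nonneg ha hb hc hy₀
  have hqz := quadratic_pos_of_nonneg ha hb hc hz₀
  have hxz : 0 ≤ z - x := sub_nonneg.2 (hxy.trans hyz).le
  have : 0 ≤ b ^ 2 - a * c := sub_nonneg.2 habc
  rw [slope_inv_quadratic hxy.ne hqx.ne' hqy.ne', slope_inv_quadratic hyz.ne hqy.ne' hqz.ne',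
    ← sub_nonneg]
  have hdiff :
      -(a * (y + z) + b) / ((a * y ^ 2 + b * y + c) * (a * z ^ 2 + b * z + c)) -
          -(a * (x + y) + b) / ((a * x ^ 2 + b * x + c) * (a * y ^ 2 + b * y + c)) =
        (z - x) *
            (a ^ 2 * (x * y + y * z + z * x) + a * b * (x + y + z) + (b ^ 2 - a * c)) /
          ((a * x ^ 2 + b * x + c) * (a * y ^ 2 + b * y + c) * (a * z ^ 2 + b * z + c)) := by
    field_simp
    ring
  rw [hdiff]
  positivity

theorem mul_le_mul_add_sq_of_div_le_or_eq_zero {t d : 𝕜} (ha : 0 ≤ a) (ht : 0 < t)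
    (h : c / (2 * t) ≤ d ∨ a = 0) : a * c ≤ (a * t + d) ^ 2 := by
  rcases h with hd | rfl
  · have hc : c ≤ d * (2 * t) := (div_le_iff₀ (by positivity)).1 hd
    calc
      a * c ≤ a * (d * (2 * t)) := mul_le_mul_of_nonneg_left hc ha
      _ = 2 * (a * t) * d := by ring
      _ ≤ (a * t + d) ^ 2 := by linarith [sq_nonneg (a * t), sq_nonneg d]
  · rw [zero_mul]
    positivity

end InvQuadratic

/-- The interpolation of `Bseq` to a real variable, with the index shifted so that `B_k` is its
value at `k + n - 2`; the denominator is expanded in powers of `x`. -/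
noncomputable def bseqInterp (p lam mu l x : ℝ) : ℝ :=
  (p + l) * (lam * mu * x ^ 2 + (lam * mu * p + (lam - mu)) * x + (p + l))⁻¹

theorem Bseq_eq_bseqInterp (p n : ℕ) (lam mu l : ℝ) (k : ℕ) :
    Bseq p n lam mu l k = bseqInterp p lam mu l (k + n - 2) := by
  rw [Bseq, bseqInterp, div_eq_mul_inv]
  ring_nf

section BseqInterp

variable {p lam mu l : ℝ}

theorem antitoneOn_bseqInterp (ha : 0 ≤ lam * mu) (hb : 0 ≤ lam * mu * p + (lam - mu))
    (hc : 0 < p + l) : AntitoneOn (bseqInterp p lam mu l) (Set.Ici 0) :=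
  fun _ hx _ hy hxy ↦
    mul_le_mul_of_nonneg_left (antitoneOn_inv_quadratic ha hb hc hx hy hxy) hc.le

theorem convexOn_bseqInterp (ha : 0 ≤ lam * mu) (hb : 0 ≤ lam * mu * p + (lam - mu))
    (hc : 0 < p + l) (habc : lam * mu * (p + l) ≤ (lam * mu * p + (lam - mu)) ^ 2) :
    ConvexOn ℝ (Set.Ici 0) (bseqInterp p lam mu l) :=
  (convexOn_inv_quadratic ha hb hc habc).smul hc.le

end BseqInterp

theorem stmt0_general (p n : ℕ) (lam mu l : ℝ) (ha : 0 ≤ lam * mu)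
    (hb : 0 ≤ lam * mu * p + (lam - mu)) (hc : 0 < p + l)
    (habc : lam * mu * (p + l) ≤ (lam * mu * p + (lam - mu)) ^ 2)
    (k : ℕ) (hk : 2 ≤ k + n) :
    0 ≤ Bseq p n lam mu l (k + 1) - Bseq p n lam mu l (k + 2) ∧
      0 ≤ Bseq p n lam mu l k - 2 * Bseq p n lam mu l (k + 1) + Bseq p n lam mu l (k + 2) := by
  obtain ⟨x, hx⟩ : ∃ x : ℝ, x = k + n - 2 := ⟨_, rfl⟩
  have hx₀ : 0 ≤ x := by
    have hk' : (2 : ℝ) ≤ k + n := by exact_mod_cast hk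
    linarith
  have h₀ : Bseq p n lam mu l k = bseqInterp p lam mu l x := by rw [Bseq_eq_bseqInterp, hx]
  have h₁ : Bseq p n lam mu l (k + 1) = bseqInterp p lam mu l (x + 1) := by
    rw [Bseq_eq_bseqInterp, hx]; push_cast; ring_nf
  have h₂ : Bseq p n lam mu l (k + 2) = bseqInterp p lam mu l (x + 2) := by
    rw [Bseq_eq_bseqInterp, hx]; push_cast; ring_nf
  have hx₁ : x + 1 ∈ Set.Ici (0 : ℝ) := Set.mem_Ici.2 (by linarith)
  have hx₂ : x + 2 ∈ Set.Ici (0 : ℝ) := Set.mem_Ici.2 (by linarith)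
  have hanti := antitoneOn_bseqInterp ha hb hc hx₁ hx₂ (by linarith)
  have hconv := (convexOn_bseqInterp ha hb hc habc).secant_mono_aux1 (y := x + 1) hx₀ hx₂
    (by linarith) (by linarith)
  rw [h₀, h₁, h₂]
  constructor <;> linarith

theorem stmt0 (p n : ℕ) (hp : 0 < p) (hn : 0 < n) (lam mu l : ℝ)
    (hmu : 0 ≤ mu) (hlm : mu ≤ lam) (hl : 0 ≤ l)
    (hcase : (l + p) / (2 * p) ≤ lam - mu ∨ (lam = 0 ∧ mu = 0)) :
    ∀ k : ℕ, 2 ≤ k →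
      0 ≤ Bseq p n lam mu l (k + 1) - Bseq p n lam mu l (k + 2) ∧
      0 ≤ Bseq p n lam mu l k - 2 * Bseq p n lam mu l (k + 1) +
          Bseq p n lam mu l (k + 2) := by
  have ha : 0 ≤ lam * mu := mul_nonneg (hmu.trans hlm) hmu
  exact fun k hk ↦ stmt0_general p n lam mu l ha
    (add_nonneg (by positivity) (sub_nonneg.2 hlm)) (by positivity)
    (mul_le_mul_add_sq_of_div_le_or_eq_zero ha (by positivity)
      (hcase.imp (add_comm l p ▸ ·) (mul_eq_zero_of_left ·.1 mu))) k (by lia)
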